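/- Let N ≥ 2 be an integer, p > 1, and let f, F > 0 satisfy f^p ≤ F. Then for every κ ∈ (0,1] and every nonnegative measurable φ on [0,1) with ∫ φ dμ = f and ∫ φ^p dμ = F, one has sup { ∫_E (M_N φ)^p dμ : E ⊆ [0,1) measurable, μ(E) = κ } ≥ min { κ·u^p + ((N^p − 1)/(N^p − N))·(F − u^{p−1} f) : f ≤ u ≤ min((F/f)^{1/(p−1)}, f/κ) }. -/

import Mathlib

open MeasureTheory Set Filter

/-- The `N`-adic interval `[k/N^m, (k+1)/N^m)` at level `m`. -/
def adicItv (N m k : ℕ) : Set ℝ :=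
  Set.Ico ((k : ℝ) / (N : ℝ) ^ m) (((k : ℝ) + 1) / (N : ℝ) ^ m)

/-- The average `(1/μ(I)) ∫_I |φ| dμ` of `φ` over the `N`-adic interval at level `m`, index `k`
(its measure is `N^{-m}`). -/
noncomputable def adicAvg (N : ℕ) (φ : ℝ → ℝ) (m k : ℕ) : ℝ :=
  (N : ℝ) ^ m * ∫ y in adicItv N m k, |φ y|

/-- The `N`-adic maximal operator on `[0,1)`:
`M_N φ(x) = sup { (1/μ(I)) ∫_I |φ| dμ : x ∈ I, I an N-adic interval }`. -/
noncomputable def adicMax (N : ℕ) (φ : ℝ → ℝ) (x : ℝ) : ℝ :=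
  sSup {r : ℝ | ∃ m k : ℕ, k < N ^ m ∧ x ∈ adicItv N m k ∧ r = adicAvg N φ m k}

/-- `sup { ∫_E (M_N φ)^p dμ : E ⊆ [0,1) measurable, μ(E) = κ }`. -/
noncomputable def supMeas (N : ℕ) (p κ : ℝ) (φ : ℝ → ℝ) : ℝ :=
  sSup {z : ℝ | ∃ E : Set ℝ, MeasurableSet E ∧ E ⊆ Set.Ico (0:ℝ) 1 ∧
    volume E = ENNReal.ofReal κ ∧ z = ∫ x in E, adicMax N φ x ^ p}

/-!
Let `X n` be the martingale of averages of `|φ|` over the `N`-adic intervals of level `n`, and let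
`S n` be its running maximum started at a level `l ≥ X 0 = f`. Since `S` moves only when `S = X`,
the martingale property gives
`∫ X (n + 1) * S (n + 1) ^ (p - 1) - ∫ X n * S n ^ (p - 1)
  = ∫ S (n + 1) * (S (n + 1) ^ (p - 1) - S n ^ (p - 1))`.
Averages grow at most by the factor `N` from one level to the next, hence so does `S`, and by
convexity of `t ↦ t ^ p` on `[1, N]` the last integrand times `(N ^ p - 1) / (N ^ p - N)` is at most
`S (n + 1) ^ p - S n ^ p`. Summing over `n` and letting `n → ∞` bounds `∫ max l M ^ p` from below,
where `M` is the maximal function. If `l` is a `κ`-quantile of `M` and `E`, of measure `κ`, lies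
between `{l < M}` and `{l ≤ M}`, this is a lower bound for `∫ M ^ p` over `E`, and the weak type
inequality gives `l ≤ f / κ`. Thus `u = l` is admissible in the minimum, unless
`l > (F / f) ^ (1 / (p - 1))`; then `u = (F / f) ^ (1 / (p - 1))` does, because its second summand
vanishes and `∫ M ^ p` over `E` is at least `κ * l ^ p`.
-/

lemma mul_rpow_sub_one {x p : ℝ} (hx : 0 ≤ x) (hp : p ≠ 0) : x * x ^ (p - 1) = x ^ p := by
  rw [← Real.rpow_one_add' hx (by rwa [add_sub_cancel]), add_sub_cancel]

lemma mul_rpow_sub_one_le_max_rpow {x y p : ℝ} (hx : 0 ≤ x) (hy : 0 ≤ y) (hp : 1 ≤ p) :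
    x * y ^ (p - 1) ≤ max x y ^ p := by
  rw [← mul_rpow_sub_one (le_max_of_le_left hx) (zero_lt_one.trans_le hp).ne']
  exact mul_le_mul (le_max_left x y)
    (Real.rpow_le_rpow hy (le_max_right x y) (sub_nonneg.2 hp)) (by positivity)
    (le_max_of_le_left hx)

lemma mul_rpow_sub_one_le_add {x y p : ℝ} (hx : 0 ≤ x) (hy : 0 ≤ y) (hp : 1 < p) :
    x * y ^ (p - 1) ≤ x ^ p / p + (1 - 1 / p) * y ^ p := by
  have hpq := Real.HolderConjugate.conjExponent hp
  have young := Real.young_inequality_of_nonneg hx (Real.rpow_nonneg hy (p - 1)) hpq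
  rwa [← Real.rpow_mul hy, hpq.sub_one_mul_conj, div_eq_mul_inv (y ^ p),
    ← hpq.one_sub_inv, mul_comm (y ^ p), ← one_div] at young

lemma rpow_sub_rpow_le {x y p : ℝ} (hx : 0 ≤ x) (hy : 0 ≤ y) (hp : 1 < p) :
    y ^ p - x ^ p ≤ p / (p - 1) * (y * (y ^ (p - 1) - x ^ (p - 1))) := by
  have hp0 : 0 < p := by linarith
  have hp1 : 0 < p - 1 := by linarith
  have young := mul_rpow_sub_one_le_add hy hx hp
  rw [mul_sub, mul_rpow_sub_one hy hp0.ne', div_mul_eq_mul_div, le_div_iff₀ hp1]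
  have scaled : p * (y * x ^ (p - 1)) ≤ y ^ p + (p - 1) * x ^ p := by
    calc p * (y * x ^ (p - 1)) ≤ p * (y ^ p / p + (1 - 1 / p) * x ^ p) := by gcongr
      _ = y ^ p + (p - 1) * x ^ p := by field_simp
  linarith

lemma rpow_le_secant {b p t : ℝ} (hp : 1 ≤ p) (hb : 1 < b) (h1t : 1 ≤ t) (htb : t ≤ b) :
    t ^ p ≤ 1 + (b ^ p - 1) / (b - 1) * (t - 1) := by
  have hb1 : 0 < b - 1 := by linarith
  have conv := (convexOn_rpow hp).right (mem_Ici.2 zero_le_one)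
    (mem_Ici.2 (zero_le_one.trans hb.le)) (div_nonneg (sub_nonneg.2 htb) hb1.le)
    (div_nonneg (sub_nonneg.2 h1t) hb1.le) (by field_simp; ring)
  have ht : (b - t) / (b - 1) + (t - 1) / (b - 1) * b = t := by field_simp; ring
  simp only [smul_eq_mul, mul_one, Real.one_rpow, ht] at conv
  refine conv.trans_eq ?_
  field_simp
  ring

/-- The constant `C = (b ^ p - 1) / (b ^ p - b)`, for which
`C * (y * (y ^ (p - 1) - x ^ (p - 1))) ≤ y ^ p - x ^ p` holds as long as `x ≤ y ≤ b * x`, with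
equality at `y = b * x`. For `b = N` it is the constant of the theorem. -/
noncomputable def jumpConst (b p : ℝ) : ℝ := (b ^ p - 1) / (b ^ p - b)

lemma lt_rpow_self {b p : ℝ} (hb : 1 < b) (hp : 1 < p) : b < b ^ p := by
  simpa using Real.rpow_lt_rpow_of_exponent_lt hb hp

lemma jumpConst_pos {b p : ℝ} (hb : 1 < b) (hp : 1 < p) : 0 < jumpConst b p := by
  have := lt_rpow_self hb hp
  exact div_pos (by linarith) (by linarith)

lemma jumpConst_mul_le_rpow_sub_rpow {b p x y : ℝ} (hb : 1 < b) (hp : 1 < p) (hx : 0 ≤ x)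
    (hxy : x ≤ y) (hyb : y ≤ b * x) :
    jumpConst b p * (y * (y ^ (p - 1) - x ^ (p - 1))) ≤ y ^ p - x ^ p := by
  rcases hx.eq_or_lt with rfl | hx
  · obtain rfl : y = 0 := le_antisymm (by simpa using hyb) hxy
    simp
  have hbp := lt_rpow_self hb hp
  obtain ⟨t, rfl⟩ : ∃ t, y = t * x := ⟨y / x, (div_mul_cancel₀ y hx.ne').symm⟩
  have h1t : 1 ≤ t := (le_mul_iff_one_le_left hx).1 hxy
  have ht : 0 ≤ t := by linarith
  have secant := rpow_le_secant hp.le hb h1t (le_of_mul_le_mul_right hyb hx)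
  have normalized : (b ^ p - 1) * (t ^ p - t) ≤ (t ^ p - 1) * (b ^ p - b) := by
    rw [div_mul_eq_mul_div, ← sub_le_iff_le_add', le_div_iff₀ (by linarith)] at secant
    linarith
  have hp0 : p ≠ 0 := (zero_lt_one.trans hp).ne'
  rw [mul_sub, mul_rpow_sub_one (hx.le.trans hxy) hp0, mul_assoc t, mul_rpow_sub_one hx.le hp0,
    Real.mul_rpow ht hx.le, jumpConst, div_mul_eq_mul_div, div_le_iff₀ (by linarith)]
  calc (b ^ p - 1) * (t ^ p * x ^ p - t * x ^ p)
      = (b ^ p - 1) * (t ^ p - t) * x ^ p := by ring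
    _ ≤ (t ^ p - 1) * (b ^ p - b) * x ^ p := by gcongr
    _ = (t ^ p * x ^ p - x ^ p) * (b ^ p - b) := by ring

section Integrability

variable {Ω : Type*} [MeasurableSpace Ω] {μ : Measure Ω} {p : ℝ} {x y : Ω → ℝ}

lemma memLp_ofReal_iff_integrable_rpow (hp : 0 < p) (hx : 0 ≤ x) (hxm : AEStronglyMeasurable x μ) :
    MemLp x (ENNReal.ofReal p) μ ↔ Integrable (fun ω ↦ x ω ^ p) μ := by
  rw [← integrable_norm_rpow_iff hxm (by simpa using hp) ENNReal.ofReal_ne_top,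
    ENNReal.toReal_ofReal hp.le]
  simp only [Real.norm_of_nonneg (hx _)]

lemma integrable_rpow_of_memLp (hp : 0 < p) (hx : 0 ≤ x) (hxp : MemLp x (ENNReal.ofReal p) μ) :
    Integrable (fun ω ↦ x ω ^ p) μ :=
  (memLp_ofReal_iff_integrable_rpow hp hx hxp.aestronglyMeasurable).1 hxp

lemma integrable_mul_rpow_sub_one (hp : 1 ≤ p) (hx : 0 ≤ x) (hy : 0 ≤ y)
    (hxp : MemLp x (ENNReal.ofReal p) μ) (hyp : MemLp y (ENNReal.ofReal p) μ) :
    Integrable (fun ω ↦ x ω * y ω ^ (p - 1)) μ := by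
  have hmax : Integrable (fun ω ↦ max (x ω) (y ω) ^ p) μ :=
    integrable_rpow_of_memLp (by linarith) (le_sup_of_le_left hx) (hxp.sup hyp)
  refine hmax.mono' (hxp.aestronglyMeasurable.mul
    (hyp.aestronglyMeasurable.aemeasurable.pow_const _).aestronglyMeasurable)
    (ae_of_all _ fun ω ↦ ?_)
  rw [Real.norm_of_nonneg (mul_nonneg (hx ω) (Real.rpow_nonneg (hy ω) _))]
  exact mul_rpow_sub_one_le_max_rpow (hx ω) (hy ω) hp

end Integrability

section RunningMax

variable {Ω : Type*} {f : ℕ → Ω → ℝ} {l : ℝ} {n : ℕ} {ω : Ω}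

/-- The running maximum `max (f 0, …, f n)` of the process `f`, cut off below at the level `l`. -/
noncomputable def runningMax (l : ℝ) (f : ℕ → Ω → ℝ) (n : ℕ) (ω : Ω) : ℝ :=
  max l (partialSups f n ω)

lemma runningMax_zero : runningMax l f 0 = (fun _ ↦ l) ⊔ f 0 := by
  funext ω
  rw [runningMax, partialSups_zero, Pi.sup_apply]

lemma runningMax_succ : runningMax l f (n + 1) = runningMax l f n ⊔ f (n + 1) := by
  funext ω
  rw [runningMax, partialSups_add_one, Pi.sup_apply, Pi.sup_apply, runningMax, max_assoc]

lemma runningMax_le_succ : runningMax l f n ω ≤ runningMax l f (n + 1) ω := by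
  rw [runningMax_succ]
  exact le_max_left _ _

lemma le_runningMax : l ≤ runningMax l f n ω :=
  le_max_left _ _

lemma self_le_runningMax : f n ω ≤ runningMax l f n ω :=
  (le_partialSups f n ω).trans (le_max_right _ _)

lemma runningMax_le (hf : BddAbove (range (f · ω))) :
    runningMax l f n ω ≤ max l (⨆ k, f k ω) := by
  rw [runningMax, Pi.partialSups_apply]
  exact max_le_max_left l (partialSups_le _ _ _ fun k _ ↦ le_ciSup hf k)

lemma tendsto_runningMax (hf : BddAbove (range (f · ω))) :
    Tendsto (runningMax l f · ω) atTop (nhds (max l (⨆ k, f k ω))) := by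
  simp only [runningMax, Pi.partialSups_apply]
  rw [← ciSup_partialSups_eq hf]
  exact tendsto_const_nhds.max (tendsto_atTop_ciSup (partialSups_monotone _)
    (bddAbove_range_partialSups.2 hf))

/-- The running maximum moves only at times at which it is attained by the process. -/
lemma mul_comp_runningMax_sub (g : ℝ → ℝ) :
    f (n + 1) ω * (g (runningMax l f (n + 1) ω) - g (runningMax l f n ω)) =
      runningMax l f (n + 1) ω * (g (runningMax l f (n + 1) ω) - g (runningMax l f n ω)) := by
  rw [runningMax_succ, Pi.sup_apply]
  rcases le_total (f (n + 1) ω) (runningMax l f n ω) with h | h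
  · simp only [max_eq_left h, sub_self, mul_zero]
  · simp only [max_eq_right h]

lemma runningMax_succ_le {b : ℝ} (hb : 1 ≤ b) (hl : 0 ≤ l) (hfb : f (n + 1) ω ≤ b * f n ω) :
    runningMax l f (n + 1) ω ≤ b * runningMax l f n ω := by
  rw [runningMax_succ]
  exact max_le (le_mul_of_one_le_left (hl.trans le_runningMax) hb)
    (hfb.trans (by gcongr; exact self_le_runningMax))

lemma memLp_runningMax [MeasurableSpace Ω] {μ : Measure Ω} [IsFiniteMeasure μ] {q : ENNReal}
    (hf : ∀ k, MemLp (f k) q μ) : MemLp (runningMax l f n) q μ := by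
  induction n with
  | zero => exact runningMax_zero (f := f) ▸ (memLp_const l).sup (hf 0)
  | succ n ih => exact runningMax_succ (f := f) ▸ ih.sup (hf (n + 1))

lemma stronglyMeasurable_runningMax {m : MeasurableSpace Ω}
    (hf : ∀ k ≤ n, StronglyMeasurable (f k)) : StronglyMeasurable (runningMax l f n) := by
  induction n with
  | zero => exact runningMax_zero (f := f) ▸ stronglyMeasurable_const.sup (hf 0 le_rfl)
  | succ n ih =>
    exact runningMax_succ (f := f) ▸ (ih fun k hk ↦ hf k (hk.trans n.le_succ)).sup (hf _ le_rfl)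

end RunningMax

section Martingale

variable {Ω : Type*} {m0 : MeasurableSpace Ω} {μ : Measure Ω} [IsFiniteMeasure μ]
  {ℱ : Filtration ℕ m0} {f : ℕ → Ω → ℝ} {p l : ℝ}

lemma integral_succ_mul_eq {n : ℕ} {g : Ω → ℝ} (hf : Martingale f ℱ μ)
    (hg : StronglyMeasurable[ℱ n] g) (hfg : Integrable (fun ω ↦ f (n + 1) ω * g ω) μ) :
    ∫ ω, f (n + 1) ω * g ω ∂μ = ∫ ω, f n ω * g ω ∂μ := by
  rw [← integral_condExp (ℱ.le n)]
  refine integral_congr_ae ((condExp_mul_of_stronglyMeasurable_right hg hfg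
    (hf.integrable _)).trans ?_)
  filter_upwards [hf.condExp_ae_eq n.le_succ] with ω hω
  rw [Pi.mul_apply, hω]

lemma integrable_mul_runningMax_rpow (hf0 : 0 ≤ f) (hfp : ∀ n, MemLp (f n) (ENNReal.ofReal p) μ)
    (hp : 1 < p) (hl : 0 ≤ l) (m n : ℕ) :
    Integrable (fun ω ↦ f m ω * runningMax l f n ω ^ (p - 1)) μ :=
  integrable_mul_rpow_sub_one hp.le (hf0 m) (fun _ ↦ hl.trans le_runningMax) (hfp m)
    (memLp_runningMax hfp)

lemma integrable_runningMax_rpow (hfp : ∀ n, MemLp (f n) (ENNReal.ofReal p) μ)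
    (hp : 0 < p) (hl : 0 ≤ l) (n : ℕ) : Integrable (fun ω ↦ runningMax l f n ω ^ p) μ :=
  integrable_rpow_of_memLp hp (fun _ ↦ hl.trans le_runningMax) (memLp_runningMax hfp)

lemma integrable_runningMax_mul_rpow_sub (hf0 : 0 ≤ f)
    (hfp : ∀ n, MemLp (f n) (ENNReal.ofReal p) μ) (hp : 1 < p) (hl : 0 ≤ l) (n : ℕ) :
    Integrable (fun ω ↦ runningMax l f (n + 1) ω *
      (runningMax l f (n + 1) ω ^ (p - 1) - runningMax l f n ω ^ (p - 1))) μ := by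
  simp only [← mul_comp_runningMax_sub (· ^ (p - 1)), mul_sub]
  exact (integrable_mul_runningMax_rpow hf0 hfp hp hl (n + 1) (n + 1)).sub
    (integrable_mul_runningMax_rpow hf0 hfp hp hl (n + 1) n)

section Telescoping

variable (hf : Martingale f ℱ μ) (hf0 : 0 ≤ f) (hfp : ∀ n, MemLp (f n) (ENNReal.ofReal p) μ)
  (hp : 1 < p) (hl : 0 ≤ l)
include hf hf0 hfp hp hl

lemma integral_mul_runningMax_rpow_succ_sub (n : ℕ) :
    ∫ ω, f (n + 1) ω * runningMax l f (n + 1) ω ^ (p - 1) ∂μ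
        - ∫ ω, f n ω * runningMax l f n ω ^ (p - 1) ∂μ =
      ∫ ω, runningMax l f (n + 1) ω *
        (runningMax l f (n + 1) ω ^ (p - 1) - runningMax l f n ω ^ (p - 1)) ∂μ := by
  have hint := integrable_mul_runningMax_rpow hf0 hfp hp hl
  have adapted : StronglyMeasurable[ℱ n] fun ω ↦ runningMax l f n ω ^ (p - 1) :=
    ((stronglyMeasurable_runningMax fun k hk ↦
      (hf.1 k).mono (ℱ.mono hk)).measurable.pow_const _).stronglyMeasurable
  simp only [← mul_comp_runningMax_sub (· ^ (p - 1)), mul_sub]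
  rw [integral_sub (hint (n + 1) (n + 1)) (hint (n + 1) n),
    integral_succ_mul_eq hf adapted (hint (n + 1) n)]

lemma monotone_integral_mul_runningMax_rpow_sub :
    Monotone fun n ↦ p / (p - 1) * ∫ ω, f n ω * runningMax l f n ω ^ (p - 1) ∂μ
      - ∫ ω, runningMax l f n ω ^ p ∂μ := by
  refine monotone_nat_of_le_succ fun n ↦ ?_
  have hS := integrable_runningMax_rpow hfp (zero_lt_one.trans hp) hl
  have step : ∫ ω, runningMax l f (n + 1) ω ^ p ∂μ - ∫ ω, runningMax l f n ω ^ p ∂μ ≤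
      p / (p - 1) * ∫ ω, runningMax l f (n + 1) ω *
        (runningMax l f (n + 1) ω ^ (p - 1) - runningMax l f n ω ^ (p - 1)) ∂μ := by
    rw [← integral_sub (hS _) (hS _), ← integral_const_mul]
    exact integral_mono ((hS _).sub (hS _))
      ((integrable_runningMax_mul_rpow_sub hf0 hfp hp hl n).const_mul _) fun ω ↦
        rpow_sub_rpow_le (hl.trans le_runningMax) (hl.trans le_runningMax) hp
  rw [← integral_mul_runningMax_rpow_succ_sub hf hf0 hfp hp hl] at step
  linarith

lemma monotone_integral_runningMax_rpow_sub {b : ℝ} (hb : 1 < b)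
    (hfb : ∀ n, ∀ᵐ ω ∂μ, f (n + 1) ω ≤ b * f n ω) :
    Monotone fun n ↦ ∫ ω, runningMax l f n ω ^ p ∂μ
      - jumpConst b p * ∫ ω, f n ω * runningMax l f n ω ^ (p - 1) ∂μ := by
  refine monotone_nat_of_le_succ fun n ↦ ?_
  have hS := integrable_runningMax_rpow hfp (zero_lt_one.trans hp) hl
  have step : jumpConst b p * ∫ ω, runningMax l f (n + 1) ω *
        (runningMax l f (n + 1) ω ^ (p - 1) - runningMax l f n ω ^ (p - 1)) ∂μ ≤
      ∫ ω, runningMax l f (n + 1) ω ^ p ∂μ - ∫ ω, runningMax l f n ω ^ p ∂μ := by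
    rw [← integral_sub (hS _) (hS _), ← integral_const_mul]
    refine integral_mono_ae ((integrable_runningMax_mul_rpow_sub hf0 hfp hp hl n).const_mul _)
      ((hS _).sub (hS _)) ?_
    filter_upwards [hfb n] with ω hω
    exact jumpConst_mul_le_rpow_sub_rpow hb hp (hl.trans le_runningMax) runningMax_le_succ
      (runningMax_succ_le hb.le hl hω)
  rw [← integral_mul_runningMax_rpow_succ_sub hf hf0 hfp hp hl] at step
  linarith

end Telescoping

lemma integral_runningMax_zero_rpow_le (hf : Martingale f ℱ μ) (hf0 : 0 ≤ f)
    (hfp : ∀ n, MemLp (f n) (ENNReal.ofReal p) μ) (hp : 1 < p) (n : ℕ) :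
    ∫ ω, runningMax 0 f n ω ^ p ∂μ ≤ (p / (p - 1)) ^ p * ∫ ω, f n ω ^ p ∂μ := by
  have hp0 : 0 < p := by linarith
  have hp1 : 0 < p - 1 := by linarith
  set q := p / (p - 1)
  have hq : 1 ≤ q := (one_le_div hp1).2 (by linarith)
  have mono := monotone_integral_mul_runningMax_rpow_sub hf hf0 hfp hp le_rfl n.zero_le
  have initial : 0 ≤ q * ∫ ω, f 0 ω * runningMax 0 f 0 ω ^ (p - 1) ∂μ
      - ∫ ω, runningMax 0 f 0 ω ^ p ∂μ := by
    have h0 : runningMax 0 f 0 = f 0 := runningMax_zero.trans (sup_eq_right.2 (hf0 0))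
    simp only [h0, mul_rpow_sub_one (hf0 0 _) hp0.ne', sub_nonneg]
    exact le_mul_of_one_le_left (integral_nonneg fun ω ↦ Real.rpow_nonneg (hf0 0 ω) p) hq
  have hS := integrable_runningMax_rpow hfp hp0 le_rfl n
  have hfn : Integrable (fun ω ↦ f n ω ^ p) μ := integrable_rpow_of_memLp hp0 (hf0 n) (hfp n)
  have young : q * ∫ ω, f n ω * runningMax 0 f n ω ^ (p - 1) ∂μ ≤
      q ^ p / p * ∫ ω, f n ω ^ p ∂μ + (1 - 1 / p) * ∫ ω, runningMax 0 f n ω ^ p ∂μ := by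
    simp only [← integral_const_mul]
    rw [← integral_add (hfn.const_mul _) (hS.const_mul _)]
    refine integral_mono ((integrable_mul_runningMax_rpow hf0 hfp hp le_rfl n n).const_mul q)
      ((hfn.const_mul _).add (hS.const_mul _)) fun ω ↦ ?_
    have := mul_rpow_sub_one_le_add (mul_nonneg (zero_le_one.trans hq) (hf0 n ω))
      (le_runningMax (f := f) (n := n) (ω := ω)) hp
    rwa [Real.mul_rpow (zero_le_one.trans hq) (hf0 n ω), mul_assoc, mul_div_right_comm] at this
  have : (1 / p) * ∫ ω, runningMax 0 f n ω ^ p ∂μ ≤ q ^ p / p * ∫ ω, f n ω ^ p ∂μ := by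
    linarith [initial.trans mono]
  rwa [div_mul_eq_mul_div, one_mul, div_mul_eq_mul_div, div_le_div_iff_of_pos_right hp0] at this

lemma jumpConst_mul_integral_rpow_sub_le {b : ℝ} (hf : Martingale f ℱ μ) (hf0 : 0 ≤ f)
    (hfp : ∀ n, MemLp (f n) (ENNReal.ofReal p) μ) (hp : 1 < p) (hl : 0 ≤ l) (hb : 1 < b)
    (hfb : ∀ n, ∀ᵐ ω ∂μ, f (n + 1) ω ≤ b * f n ω) (hfl : ∀ᵐ ω ∂μ, f 0 ω ≤ l) (n : ℕ) :
    jumpConst b p * (∫ ω, f n ω ^ p ∂μ - l ^ (p - 1) * ∫ ω, f 0 ω ∂μ) ≤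
      ∫ ω, runningMax l f n ω ^ p ∂μ - μ.real univ * l ^ p := by
  have mono := monotone_integral_runningMax_rpow_sub hf hf0 hfp hp hl hb hfb n.zero_le
  have start : ∀ᵐ ω ∂μ, runningMax l f 0 ω = l := by
    filter_upwards [hfl] with ω hω
    rw [runningMax_zero, Pi.sup_apply, sup_eq_left.2 hω]
  have start_rpow : ∫ ω, runningMax l f 0 ω ^ p ∂μ = μ.real univ * l ^ p := by
    rw [integral_congr_ae (start.mono fun ω hω ↦ congrArg (· ^ p) hω), integral_const, smul_eq_mul]
  have start_mul : ∫ ω, f 0 ω * runningMax l f 0 ω ^ (p - 1) ∂μ = l ^ (p - 1) * ∫ ω, f 0 ω ∂μ := by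
    rw [integral_congr_ae (start.mono fun ω hω ↦ congrArg (f 0 ω * · ^ (p - 1)) hω),
      integral_mul_const, mul_comm]
  have terminal : ∫ ω, f n ω ^ p ∂μ ≤ ∫ ω, f n ω * runningMax l f n ω ^ (p - 1) ∂μ := by
    refine integral_mono (integrable_rpow_of_memLp (by linarith) (hf0 n) (hfp n))
      (integrable_mul_runningMax_rpow hf0 hfp hp hl n n) fun ω ↦ ?_
    have h0 := hf0 n ω
    rw [← mul_rpow_sub_one h0 (zero_lt_one.trans hp).ne']
    exact mul_le_mul_of_nonneg_left (Real.rpow_le_rpow h0 self_le_runningMax (by linarith)) h0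
  have := mul_le_mul_of_nonneg_left terminal (jumpConst_pos hb hp).le
  simp only [start_rpow, start_mul] at mono
  linarith

lemma memLp_iSup (hf : Martingale f ℱ μ) (hf0 : 0 ≤ f)
    (hfp : ∀ n, MemLp (f n) (ENNReal.ofReal p) μ) (hp : 1 < p) {K : ℝ}
    (hK : ∀ n, ∫ ω, f n ω ^ p ∂μ ≤ K) (hbdd : ∀ᵐ ω ∂μ, BddAbove (range (f · ω))) :
    MemLp (fun ω ↦ ⨆ n, f n ω) (ENNReal.ofReal p) μ := by
  have hp0 : 0 < p := by linarith
  have : 0 < p - 1 := by linarith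
  have hS : ∀ n, MemLp (runningMax 0 f n) (ENNReal.ofReal p) μ := fun n ↦ memLp_runningMax hfp
  have lim : ∀ᵐ ω ∂μ, Tendsto (runningMax 0 f · ω) atTop (nhds (⨆ n, f n ω)) := by
    filter_upwards [hbdd] with ω hω
    simpa only [max_eq_right (Real.iSup_nonneg fun n ↦ hf0 n ω)] using
      tendsto_runningMax (l := 0) hω
  refine ⟨aestronglyMeasurable_of_tendsto_ae _ (fun n ↦ (hS n).aestronglyMeasurable) lim,
    (Lp.eLpNorm_le_of_ae_tendsto (C := ENNReal.ofReal (((p / (p - 1)) ^ p * K) ^ p⁻¹))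
      (Eventually.of_forall fun n ↦ ?_) (fun n ↦ (hS n).aestronglyMeasurable) lim).trans_lt
      ENNReal.ofReal_lt_top⟩
  rw [(hS n).eLpNorm_eq_integral_rpow_norm (by simpa using hp0) ENNReal.ofReal_ne_top,
    ENNReal.toReal_ofReal hp0.le]
  simp only [Real.norm_of_nonneg (le_runningMax (l := 0))]
  gcongr ENNReal.ofReal (?_ ^ _)
  · exact integral_nonneg fun ω ↦ Real.rpow_nonneg le_runningMax p
  · exact (integral_runningMax_zero_rpow_le hf hf0 hfp hp n).trans (by gcongr; exact hK n)

lemma jumpConst_mul_integral_limit_rpow_sub_le {b : ℝ} {φ : Ω → ℝ} (hf : Martingale f ℱ μ)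
    (hf0 : 0 ≤ f) (hfp : ∀ n, MemLp (f n) (ENNReal.ofReal p) μ) (hp : 1 < p) (hl : 0 ≤ l)
    (hb : 1 < b) (hfb : ∀ n, ∀ᵐ ω ∂μ, f (n + 1) ω ≤ b * f n ω) (hfl : ∀ᵐ ω ∂μ, f 0 ω ≤ l)
    (hφ : ∀ᵐ ω ∂μ, Tendsto (f · ω) atTop (nhds (φ ω)))
    (hM : MemLp (fun ω ↦ ⨆ n, f n ω) (ENNReal.ofReal p) μ) :
    jumpConst b p * (∫ ω, φ ω ^ p ∂μ - l ^ (p - 1) * ∫ ω, f 0 ω ∂μ) ≤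
      ∫ ω, max l (⨆ n, f n ω) ^ p ∂μ - μ.real univ * l ^ p := by
  have hp0 : 0 < p := by linarith
  have bdd : ∀ᵐ ω ∂μ, BddAbove (range (f · ω)) := hφ.mono fun ω hω ↦ hω.bddAbove_range
  have lim : Tendsto (fun n ↦ ∫ ω, f n ω ^ p ∂μ) atTop (nhds (∫ ω, φ ω ^ p ∂μ)) := by
    refine tendsto_integral_of_dominated_convergence (fun ω ↦ (⨆ n, f n ω) ^ p)
      (fun n ↦ (integrable_rpow_of_memLp hp0 (hf0 n) (hfp n)).1)
      (integrable_rpow_of_memLp hp0 (fun ω ↦ Real.iSup_nonneg fun n ↦ hf0 n ω) hM) (fun n ↦ ?_)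
      (hφ.mono fun ω hω ↦ hω.rpow_const (Or.inr hp0.le))
    filter_upwards [bdd] with ω hω
    rw [Real.norm_of_nonneg (Real.rpow_nonneg (hf0 n ω) p)]
    exact Real.rpow_le_rpow (hf0 n ω) (le_ciSup hω n) hp0.le
  have hZ : Integrable (fun ω ↦ max l (⨆ n, f n ω) ^ p) μ :=
    integrable_rpow_of_memLp hp0 (fun ω ↦ le_max_of_le_left hl) ((memLp_const l).sup hM)
  refine le_of_tendsto ((lim.sub_const _).const_mul _) (Eventually.of_forall fun n ↦ ?_)
  refine (jumpConst_mul_integral_rpow_sub_le hf hf0 hfp hp hl hb hfb hfl n).trans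
    (sub_le_sub_right (integral_mono_ae (integrable_runningMax_rpow hfp hp0 hl n) hZ ?_) _)
  filter_upwards [bdd] with ω hω
  exact Real.rpow_le_rpow (hl.trans le_runningMax) (runningMax_le hω) hp0.le

lemma ofReal_mul_measure_lt_iSup_le (hf : Martingale f ℱ μ) (hf0 : 0 ≤ f) {t : ℝ} (ht : 0 ≤ t) :
    ENNReal.ofReal t * μ {ω | t < ⨆ n, f n ω} ≤ ENNReal.ofReal (∫ ω, f 0 ω ∂μ) := by
  set s : ℕ → Set Ω := fun n ↦ {ω | t ≤ partialSups (f · ω) n}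
  have weak n : ENNReal.ofReal t * μ (s n) ≤ ENNReal.ofReal (∫ ω, f 0 ω ∂μ) := by
    have doob := maximal_ineq hf.submartingale hf0 (ε := ⟨t, ht⟩) n
    simp only [← partialSups_eq_sup'_range] at doob
    have constant_mean : ∫ ω, f 0 ω ∂μ = ∫ ω, f n ω ∂μ := by
      simpa using hf.setIntegral_eq n.zero_le MeasurableSet.univ
    rw [constant_mean, ENNReal.ofReal, Real.toNNReal_of_nonneg ht]
    exact doob.trans (ENNReal.ofReal_le_ofReal
      (setIntegral_le_integral (hf.integrable n) (ae_of_all _ (hf0 n))))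
  have cover : {ω | t < ⨆ n, f n ω} ⊆ ⋃ n, s n := fun ω hω ↦ by
    obtain ⟨n, hn⟩ := exists_lt_of_lt_ciSup (mem_ofPred.1 hω)
    exact mem_iUnion.2 ⟨n, hn.le.trans (le_partialSups (f · ω) n)⟩
  have mono : Monotone s := fun m n hmn ω hω ↦
    mem_ofPred.2 ((mem_ofPred.1 hω).trans (partialSups_monotone _ hmn))
  calc ENNReal.ofReal t * μ {ω | t < ⨆ n, f n ω}
      ≤ ENNReal.ofReal t * μ (⋃ n, s n) := by gcongr
    _ = ⨆ n, ENNReal.ofReal t * μ (s n) := by rw [mono.measure_iUnion, ENNReal.mul_iSup]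
    _ ≤ ENNReal.ofReal (∫ ω, f 0 ω ∂μ) := iSup_le weak

lemma ofReal_mul_measure_le_iSup_le (hf : Martingale f ℱ μ) (hf0 : 0 ≤ f) {t : ℝ} (ht : 0 < t) :
    ENNReal.ofReal t * μ {ω | t ≤ ⨆ n, f n ω} ≤ ENNReal.ofReal (∫ ω, f 0 ω ∂μ) := by
  have lim : Tendsto (fun s ↦ ENNReal.ofReal s * μ {ω | t ≤ ⨆ n, f n ω}) (nhdsWithin t (Iio t))
      (nhds (ENNReal.ofReal t * μ {ω | t ≤ ⨆ n, f n ω})) :=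
    ENNReal.Tendsto.mul_const (ENNReal.continuous_ofReal.continuousWithinAt.tendsto)
      (Or.inr (measure_ne_top _ _))
  refine le_of_tendsto lim ?_
  filter_upwards [Ioo_mem_nhdsLT ht] with s hs
  refine le_trans ?_ (ofReal_mul_measure_lt_iSup_le hf hf0 hs.1.le)
  gcongr
  exact hs.2

end Martingale

section LevelSets

lemma exists_quantile {Ω : Type*} [MeasurableSpace Ω] {μ : Measure Ω} [IsFiniteMeasure μ]
    {X : Ω → ℝ} (hX : Measurable X) {κ : ENNReal} (hκ : κ ≠ 0) {a : ℝ}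
    (ha : κ ≤ μ {ω | a ≤ X ω}) :
    ∃ l, a ≤ l ∧ κ ≤ μ {ω | l ≤ X ω} ∧ μ {ω | l < X ω} ≤ κ := by
  set s : ℝ → Set Ω := fun t ↦ {ω | t ≤ X ω}
  have anti : Antitone s := fun t u htu ω hω ↦ mem_ofPred.2 (htu.trans (mem_ofPred.1 hω))
  have meas t : NullMeasurableSet (s t) μ :=
    (measurableSet_le measurable_const hX).nullMeasurableSet
  have vanish : Tendsto (fun t ↦ μ (s t)) atTop (nhds 0) := by
    have empty : ⋂ t, s t = ∅ := eq_empty_of_forall_notMem fun ω hω ↦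
      (lt_add_one (X ω)).not_ge (mem_ofPred.1 (mem_iInter.1 hω (X ω + 1)))
    rw [← measure_empty (μ := μ), ← empty]
    exact tendsto_measure_iInter_atTop meas anti ⟨a, measure_ne_top _ _⟩
  obtain ⟨c, hc⟩ := (vanish.eventually_lt_const (pos_iff_ne_zero.2 hκ)).exists
  have bdd : BddAbove {t | κ ≤ μ (s t)} := ⟨c, fun t ht ↦
    le_of_not_gt fun hct ↦ (hc.trans_le (mem_ofPred.1 ht)).not_ge (measure_mono (anti hct.le))⟩
  set l := sSup {t | κ ≤ μ (s t)}
  refine ⟨l, le_csSup bdd ha, ?_, ?_⟩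
  · obtain ⟨u, mono, hul, hu⟩ := exists_seq_tendsto_sSup ⟨a, ha⟩ bdd
    calc κ ≤ ⨅ n, μ (s (u n)) := le_iInf hu
      _ = μ (⋂ n, s (u n)) :=
        ((anti.comp_monotone mono).measure_iInter (fun n ↦ meas _) ⟨0, measure_ne_top _ _⟩).symm
      _ ≤ μ (s l) := measure_mono fun ω hω ↦ le_of_tendsto' hul fun n ↦ mem_iInter.1 hω n
  · obtain ⟨u, mono, hlu, hul⟩ := exists_seq_strictAnti_tendsto l
    calc μ {ω | l < X ω} ≤ μ (⋃ n, s (u n)) := measure_mono fun ω hω ↦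
          mem_iUnion.2 ((hul.eventually_le_const (mem_ofPred.1 hω)).exists)
      _ = ⨆ n, μ (s (u n)) := (anti.comp mono.antitone).measure_iUnion
      _ ≤ κ := iSup_le fun n ↦ le_of_not_ge fun h ↦ (hlu n).not_ge (le_csSup bdd h)

lemma exists_measure_eq_of_subset {μ : Measure ℝ} [IsFiniteMeasure μ] [NullSingletonClass μ]
    {A B : Set ℝ} {κ : ENNReal} (hA : MeasurableSet A) (hB : MeasurableSet B) (hAB : A ⊆ B)
    (hAκ : μ A ≤ κ) (hκB : κ ≤ μ B) : ∃ E, MeasurableSet E ∧ A ⊆ E ∧ E ⊆ B ∧ μ E = κ := by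
  rcases hAκ.eq_or_lt with rfl | hAκ
  · exact ⟨A, hA, subset_rfl, hAB, rfl⟩
  rcases hκB.eq_or_lt with rfl | hκB
  · exact ⟨B, hB, hAB, subset_rfl, rfl⟩
  have hlt : κ - μ A < μ.restrict (B \ A) univ := by
    rw [Measure.restrict_apply_univ, measure_sdiff hAB hA.nullMeasurableSet (measure_ne_top _ _)]
    exact ENNReal.sub_lt_of_lt_add hAκ.le
      (hκB.trans_eq (tsub_add_cancel_of_le (measure_mono hAB)).symm)
  obtain ⟨a, ha⟩ := ((tendsto_measure_Ici_atBot _).eventually_const_lt hlt).exists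
  obtain ⟨l, -, hle, hlt⟩ := exists_quantile measurable_id (tsub_pos_of_lt hAκ).ne' ha.le
  have hl : μ.restrict (B \ A) (Ici l) = κ - μ A :=
    le_antisymm ((measure_congr Ioi_ae_eq_Ici).ge.trans hlt) hle
  refine ⟨A ∪ Ici l ∩ (B \ A), hA.union (measurableSet_Ici.inter (hB.diff hA)), subset_union_left,
    union_subset hAB (inter_subset_right.trans sdiff_subset), ?_⟩
  rw [measure_union (disjoint_sdiff_right.mono_right inter_subset_right)
    (measurableSet_Ici.inter (hB.diff hA)), ← Measure.restrict_apply measurableSet_Ici, hl,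
    add_tsub_cancel_of_le hAκ.le]

lemma integral_max_rpow_eq {Ω : Type*} [MeasurableSpace Ω] {μ : Measure Ω}
    {X : Ω → ℝ} {l p : ℝ} {E : Set Ω} (hE : MeasurableSet E) (hltE : {ω | l < X ω} ⊆ E)
    (hEle : E ⊆ {ω | l ≤ X ω}) (hX : Integrable (fun ω ↦ max l (X ω) ^ p) μ) :
    ∫ ω, max l (X ω) ^ p ∂μ = ∫ ω in E, X ω ^ p ∂μ + μ.real Eᶜ * l ^ p := by
  have inside : ∫ ω in E, max l (X ω) ^ p ∂μ = ∫ ω in E, X ω ^ p ∂μ :=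
    setIntegral_congr_fun hE fun _ hω ↦ congrArg (· ^ p) (max_eq_right (hEle hω))
  have outside : ∫ ω in Eᶜ, max l (X ω) ^ p ∂μ = ∫ _ in Eᶜ, l ^ p ∂μ :=
    setIntegral_congr_fun hE.compl fun ω hω ↦
      congrArg (· ^ p) (max_eq_left (not_lt.1 fun h ↦ hω (hltE h)))
  rw [← integral_add_compl hE hX, inside, outside, setIntegral_const, smul_eq_mul]

end LevelSets

section Extremal

lemma exists_level_of_martingale {μ : Measure ℝ} [IsProbabilityMeasure μ] [NullSingletonClass μ]
    {ℱ : Filtration ℕ (borel ℝ)} {f : ℕ → ℝ → ℝ} {c κ : ℝ} (hf : Martingale f ℱ μ) (hf0 : 0 ≤ f)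
    (hc : 0 < c) (hfc : ∀ᵐ x ∂μ, f 0 x = c) (hbdd : ∀ᵐ x ∂μ, BddAbove (range (f · x)))
    (hκ : κ ∈ Ioc 0 1) :
    ∃ l ∈ Icc c (c / κ), ∃ E, MeasurableSet E ∧ {x | l < ⨆ n, f n x} ⊆ E ∧
      E ⊆ {x | l ≤ ⨆ n, f n x} ∧ μ E = ENNReal.ofReal κ := by
  have meas : Measurable fun x ↦ ⨆ n, f n x :=
    .iSup fun n ↦ ((hf.1 n).mono (ℱ.le n)).measurable
  have large : ENNReal.ofReal κ ≤ μ {x | c ≤ ⨆ n, f n x} := by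
    refine (ENNReal.ofReal_le_one.2 hκ.2).trans_eq
      ((mem_ae_iff_prob_eq_one (measurableSet_le measurable_const meas)).1 ?_).symm
    filter_upwards [hfc, hbdd] with x hx hbdd
    exact hx ▸ le_ciSup hbdd 0
  obtain ⟨l, hcl, hle, hlt⟩ := exists_quantile meas (ENNReal.ofReal_pos.2 hκ.1).ne' large
  have hl : 0 < l := hc.trans_le hcl
  obtain ⟨E, hE, hltE, hEle, hEκ⟩ := exists_measure_eq_of_subset
    (measurableSet_lt measurable_const meas) (measurableSet_le measurable_const meas)
    (fun x hx ↦ mem_ofPred.2 (mem_ofPred.1 hx).le) hlt hle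
  refine ⟨l, ⟨hcl, ?_⟩, E, hE, hltE, hEle, hEκ⟩
  rw [le_div_iff₀ hκ.1, ← ENNReal.ofReal_le_ofReal_iff hc.le, ENNReal.ofReal_mul hl.le,
    ← integral_eq_const hfc]
  exact le_trans (by gcongr) (ofReal_mul_measure_le_iSup_le hf hf0 hl)

lemma exists_setIntegral_iSup_rpow_ge {μ : Measure ℝ} [IsProbabilityMeasure μ]
    [NullSingletonClass μ] {ℱ : Filtration ℕ (borel ℝ)} {f : ℕ → ℝ → ℝ} {φ : ℝ → ℝ} {b c p κ : ℝ}
    (hf : Martingale f ℱ μ) (hf0 : 0 ≤ f) (hfp : ∀ n, MemLp (f n) (ENNReal.ofReal p) μ)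
    (hp : 1 < p) (hb : 1 < b) (hfb : ∀ n, ∀ᵐ x ∂μ, f (n + 1) x ≤ b * f n x) (hc : 0 < c)
    (hfc : ∀ᵐ x ∂μ, f 0 x = c) (hφ : ∀ᵐ x ∂μ, Tendsto (f · x) atTop (nhds (φ x)))
    (hM : MemLp (fun x ↦ ⨆ n, f n x) (ENNReal.ofReal p) μ) (hκ : κ ∈ Ioc 0 1) :
    ∃ l ∈ Icc c (c / κ), ∃ E, MeasurableSet E ∧ μ E = ENNReal.ofReal κ ∧
      κ * l ^ p ≤ ∫ x in E, (⨆ n, f n x) ^ p ∂μ ∧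
      κ * l ^ p + jumpConst b p * (∫ x, φ x ^ p ∂μ - l ^ (p - 1) * c) ≤
        ∫ x in E, (⨆ n, f n x) ^ p ∂μ := by
  have hp0 : 0 < p := by linarith
  obtain ⟨l, hcl, E, hE, hltE, hEle, hEκ⟩ := exists_level_of_martingale hf hf0 hc hfc
    (hφ.mono fun x hx ↦ hx.bddAbove_range) hκ
  have hl : 0 ≤ l := hc.le.trans hcl.1
  have hEκ' : μ.real E = κ := by rw [measureReal_def, hEκ, ENNReal.toReal_ofReal hκ.1.le]
  refine ⟨l, hcl, E, hE, hEκ, ?_, ?_⟩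
  · have hMp : Integrable (fun x ↦ (⨆ n, f n x) ^ p) μ :=
      integrable_rpow_of_memLp hp0 (fun x ↦ Real.iSup_nonneg fun n ↦ hf0 n x) hM
    calc κ * l ^ p = ∫ _ in E, l ^ p ∂μ := by rw [setIntegral_const, hEκ', smul_eq_mul]
      _ ≤ ∫ x in E, (⨆ n, f n x) ^ p ∂μ :=
        setIntegral_mono_on integrableOn_const hMp.integrableOn hE
          fun x hx ↦ Real.rpow_le_rpow hl (hEle hx) hp0.le
  · have hZ : Integrable (fun x ↦ max l (⨆ n, f n x) ^ p) μ :=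
      integrable_rpow_of_memLp hp0 (fun x ↦ le_max_of_le_left hl) ((memLp_const l).sup hM)
    have bound := jumpConst_mul_integral_limit_rpow_sub_le hf hf0 hfp hp hl hb hfb
      (hfc.mono fun x hx ↦ hx.trans_le hcl.1) hφ hM
    rw [integral_eq_const hfc, integral_max_rpow_eq hE hltE hEle hZ, probReal_univ,
      probReal_compl_eq_one_sub hE, hEκ'] at bound
    linarith

lemma sInf_image_le_of_level {f F p κ C l I : ℝ} (hp : 1 < p) (hf : 0 < f) (hfF : f ^ p ≤ F)
    (hκ : 0 ≤ κ) (hC : 0 ≤ C) (hl : l ∈ Icc f (f / κ)) (hI : κ * l ^ p ≤ I)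
    (hI' : κ * l ^ p + C * (F - l ^ (p - 1) * f) ≤ I) :
    sInf ((fun u ↦ κ * u ^ p + C * (F - u ^ (p - 1) * f)) ''
      Icc f (min ((F / f) ^ (1 / (p - 1))) (f / κ))) ≤ I := by
  have hp1 : 0 < p - 1 := by linarith
  have hFf : 0 ≤ F / f := div_nonneg ((Real.rpow_nonneg hf.le p).trans hfF) hf.le
  set v := (F / f) ^ (1 / (p - 1))
  have hv : v ^ (p - 1) = F / f := by
    rw [← Real.rpow_mul hFf, one_div_mul_cancel hp1.ne', Real.rpow_one]
  have hfv : f ≤ v := by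
    rw [← Real.rpow_le_rpow_iff hf.le (Real.rpow_nonneg hFf _) hp1, hv, Real.rpow_sub_one hf.ne']
    gcongr
  have bdd : BddBelow ((fun u ↦ κ * u ^ p + C * (F - u ^ (p - 1) * f)) ''
      Icc f (min v (f / κ))) := by
    refine ⟨0, forall_mem_image.2 fun u ⟨hfu, huv⟩ ↦ ?_⟩
    have hu : 0 ≤ u := hf.le.trans hfu
    have : u ^ (p - 1) * f ≤ F := by
      rw [← le_div_iff₀ hf, ← hv]
      exact Real.rpow_le_rpow hu (huv.trans (min_le_left _ _)) hp1.le
    have := sub_nonneg.2 this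
    positivity
  rcases le_total l v with hlv | hvl
  · exact (csInf_le bdd (mem_image_of_mem _ ⟨hl.1, le_min hlv hl.2⟩)).trans hI'
  · refine (csInf_le bdd (mem_image_of_mem _ ⟨hfv, le_min le_rfl (hvl.trans hl.2)⟩)).trans
      (le_trans ?_ hI)
    have : 0 ≤ v := hf.le.trans hfv
    rw [hv, div_mul_cancel₀ F hf.ne', sub_self, mul_zero, add_zero]
    gcongr

end Extremal

section CondExp

lemma condExp_comap_ae_eq_setAverage {Ω ι : Type*} [MeasurableSpace Ω] {μ : Measure Ω}
    [IsFiniteMeasure μ] [Countable ι] [MeasurableSpace ι] [MeasurableSingletonClass ι] {X : Ω → ι}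
    {φ : Ω → ℝ} (hX : Measurable X) (hφ : Integrable φ μ) :
    μ[φ | MeasurableSpace.comap X inferInstance] =ᵐ[μ] fun ω ↦ ⨍ y in X ⁻¹' {X ω}, φ y ∂μ := by
  obtain ⟨h, -, hh⟩ := (stronglyMeasurable_condExp (f := φ) (μ := μ)
    (m := MeasurableSpace.comap X inferInstance)).measurable.exists_eq_measurable_comp
  have fiber i : ∀ᵐ ω ∂μ, X ω = i → h i = ⨍ y in X ⁻¹' {i}, φ y ∂μ := by
    have hi : MeasurableSet (X ⁻¹' {i}) := hX (measurableSet_singleton i)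
    by_cases null : μ.real (X ⁻¹' {i}) = 0
    · have : ∀ᵐ ω ∂μ, ω ∉ X ⁻¹' {i} := measure_eq_zero_iff_ae_notMem.1
        ((measureReal_eq_zero_iff).1 null)
      exact this.mono fun ω hω hi ↦ (hω hi).elim
    · have const : EqOn (h ∘ X) (fun _ ↦ h i) (X ⁻¹' {i}) := fun ω hω ↦ congrArg h hω
      refine ae_of_all _ fun _ _ ↦ ?_
      rw [setAverage_eq, ← setIntegral_condExp hX.comap_le hφ ⟨{i}, measurableSet_singleton i, rfl⟩,
        hh, setIntegral_congr_fun hi const, setIntegral_const, inv_smul_smul₀ null]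
  rw [hh]
  filter_upwards [ae_all_iff.2 fiber] with ω hω
  exact hω _ rfl

end CondExp

section Adic

variable {N m n k : ℕ} {φ : ℝ → ℝ} {x p : ℝ}

instance isProbabilityMeasure_restrict_Ico :
    IsProbabilityMeasure (volume.restrict (Ico (0 : ℝ) 1)) :=
  ⟨by simp⟩

lemma mem_adicItv_iff_floor_eq (hN : 0 < N) (hx : 0 ≤ x) :
    x ∈ adicItv N m k ↔ ⌊(N : ℝ) ^ m * x⌋₊ = k := by
  have hNm : (0 : ℝ) < (N : ℝ) ^ m := by positivity
  rw [Nat.floor_eq_iff (by positivity), adicItv, mem_Ico, div_le_iff₀' hNm, lt_div_iff₀' hNm]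

lemma floor_pow_mul_lt (hN : 0 < N) (hx : x ∈ Ico 0 1) : ⌊(N : ℝ) ^ m * x⌋₊ < N ^ m := by
  have hNm : (0 : ℝ) < (N : ℝ) ^ m := by positivity
  rw [Nat.floor_lt (mul_nonneg hNm.le hx.1), Nat.cast_pow]
  exact mul_lt_of_lt_one_right hNm hx.2

lemma floor_pow_succ_mul_div (hN : 0 < N) :
    ⌊(N : ℝ) ^ (m + 1) * x⌋₊ / N = ⌊(N : ℝ) ^ m * x⌋₊ := by
  rw [← Nat.floor_div_natCast, pow_succ', mul_assoc, mul_div_cancel_left₀ _ (by positivity)]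

lemma adicItv_subset_Ico (hN : 0 < N) (hk : k < N ^ m) : adicItv N m k ⊆ Ico 0 1 := by
  refine Ico_subset_Ico (by positivity) ((div_le_one (by positivity)).2 ?_)
  exact_mod_cast hk

lemma volume_real_adicItv : volume.real (adicItv N m k) = ((N : ℝ) ^ m)⁻¹ := by
  rw [adicItv, Real.volume_real_Ico_of_le (by gcongr; linarith)]
  ring

lemma adicItv_succ_subset (hN : 0 < N) : adicItv N (m + 1) k ⊆ adicItv N m (k / N) := fun x hx ↦ by
  have hx0 : 0 ≤ x := le_trans (by positivity) hx.1
  rw [mem_adicItv_iff_floor_eq hN hx0] at hx ⊢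
  rw [← hx, floor_pow_succ_mul_div hN]

lemma floor_preimage_inter_Ico (hN : 0 < N) (hk : k < N ^ m) :
    (fun x : ℝ ↦ ⌊(N : ℝ) ^ m * x⌋₊) ⁻¹' {k} ∩ Ico 0 1 = adicItv N m k := by
  ext x
  refine ⟨fun hx ↦ (mem_adicItv_iff_floor_eq hN hx.2.1).2 hx.1, fun hx ↦ ?_⟩
  have hx1 := adicItv_subset_Ico hN hk hx
  exact ⟨(mem_adicItv_iff_floor_eq hN hx1.1).1 hx, hx1⟩

lemma adicAvg_nonneg : 0 ≤ adicAvg N φ m k :=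
  mul_nonneg (by positivity) (integral_nonneg fun _ ↦ abs_nonneg _)

lemma adicAvg_succ_le (hN : 0 < N) (hφ : IntegrableOn φ (adicItv N m (k / N))) :
    adicAvg N φ (m + 1) k ≤ N * adicAvg N φ m (k / N) := by
  rw [adicAvg, adicAvg, ← mul_assoc, ← pow_succ']
  gcongr
  · exact ae_of_all _ fun _ ↦ abs_nonneg _
  · exact hφ.abs
  · exact adicItv_succ_subset hN

/-- The martingale of averages of `|φ|` over `N`-adic intervals: its value at time `n` at a point
of `[0, 1)` is the average over the interval of level `n` containing that point. -/
noncomputable def adicMartingale (N : ℕ) (φ : ℝ → ℝ) (n : ℕ) (x : ℝ) : ℝ :=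
  adicAvg N φ n ⌊(N : ℝ) ^ n * x⌋₊

lemma measurable_floor_pow_mul : Measurable fun x : ℝ ↦ ⌊(N : ℝ) ^ n * x⌋₊ :=
  Nat.measurable_floor.comp (measurable_const_mul _)

/-- The `N`-adic filtration: the `σ`-algebra at time `n` is generated by the index of the interval
of level `n`, with the whole negative half-line assigned to the interval of index `0`. -/
noncomputable def adicFiltration (hN : 0 < N) : Filtration ℕ (borel ℝ) where
  seq n := MeasurableSpace.comap (fun x ↦ ⌊(N : ℝ) ^ n * x⌋₊) ⊤
  mono' := monotone_nat_of_le_succ fun n ↦ by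
    rw [← measurable_iff_comap_le]
    simp only [← floor_pow_succ_mul_div hN (m := n)]
    exact (measurable_from_top (f := (· / N))).comp (comap_measurable _)
  le' n := measurable_floor_pow_mul.comap_le

lemma adicMartingale_ae_eq_condExp (hN : 0 < N) (hφ : IntegrableOn φ (Ico 0 1)) :
    adicMartingale N φ n =ᵐ[volume.restrict (Ico 0 1)]
      (volume.restrict (Ico 0 1))[fun x ↦ |φ x| | adicFiltration hN n] := by
  have average := condExp_comap_ae_eq_setAverage
    (measurable_floor_pow_mul (N := N) (n := n)) hφ.abs
  filter_upwards [average, ae_restrict_mem measurableSet_Ico] with x hx hx1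
  refine Eq.trans ?_ hx.symm
  have meas := measurable_floor_pow_mul (N := N) (n := n)
    (measurableSet_singleton ⌊(N : ℝ) ^ n * x⌋₊)
  rw [setAverage_eq, measureReal_restrict_apply meas, Measure.restrict_restrict meas,
    floor_preimage_inter_Ico hN (floor_pow_mul_lt hN hx1), volume_real_adicItv, inv_inv,
    smul_eq_mul]
  rfl

lemma martingale_adicMartingale (hN : 0 < N) (hφ : IntegrableOn φ (Ico 0 1)) :
    Martingale (adicMartingale N φ) (adicFiltration hN) (volume.restrict (Ico 0 1)) := by
  refine ⟨fun n ↦ ((measurable_from_top (f := adicAvg N φ n)).comp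
    (comap_measurable _)).stronglyMeasurable, fun m n hmn ↦ ?_⟩
  exact (condExp_congr_ae (adicMartingale_ae_eq_condExp hN hφ)).trans
    ((condExp_condExp_of_le ((adicFiltration hN).mono hmn) ((adicFiltration hN).le n)).trans
      (adicMartingale_ae_eq_condExp hN hφ).symm)

lemma adicMartingale_nonneg : 0 ≤ adicMartingale N φ := fun _ _ ↦ adicAvg_nonneg

lemma adicMartingale_zero (hx : x ∈ Ico 0 1) :
    adicMartingale N φ 0 x = ∫ y in Ico 0 1, |φ y| := by
  simp [adicMartingale, adicAvg, adicItv, Nat.floor_eq_zero.2 hx.2]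

lemma adicMartingale_succ_le (hN : 0 < N) (hφ : IntegrableOn φ (Ico 0 1)) (hx : x ∈ Ico 0 1) :
    adicMartingale N φ (n + 1) x ≤ N * adicMartingale N φ n x := by
  rw [adicMartingale, adicMartingale, ← floor_pow_succ_mul_div hN (m := n)]
  refine adicAvg_succ_le hN (hφ.mono_set (adicItv_subset_Ico hN ?_))
  rw [floor_pow_succ_mul_div hN]
  exact floor_pow_mul_lt hN hx

lemma adicMax_eq_iSup (hN : 0 < N) (hx : x ∈ Ico 0 1) :
    adicMax N φ x = ⨆ n, adicMartingale N φ n x := by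
  rw [adicMax, iSup]
  congr 1
  ext r
  constructor
  · rintro ⟨m, k, -, hxk, rfl⟩
    exact ⟨m, congrArg (adicAvg N φ m) ((mem_adicItv_iff_floor_eq hN hx.1).1 hxk)⟩
  · rintro ⟨m, rfl⟩
    exact ⟨m, _, floor_pow_mul_lt hN hx, (mem_adicItv_iff_floor_eq hN hx.1).2 rfl, rfl⟩

lemma measurable_max_zero_iSup_adicFiltration (hN : 1 < N) :
    Measurable[⨆ n, adicFiltration (zero_lt_one.trans hN) n] fun x : ℝ ↦ max x 0 := by
  have hN0 : 0 < N := zero_lt_one.trans hN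
  have floor_max x n : ⌊max x 0 * (N : ℝ) ^ n⌋₊ = ⌊(N : ℝ) ^ n * x⌋₊ := by
    rcases le_total x 0 with hx | hx
    · rw [max_eq_right hx, zero_mul, Nat.floor_zero,
        Nat.floor_of_nonpos (mul_nonpos_of_nonneg_of_nonpos (by positivity) hx)]
    · rw [max_eq_left hx, mul_comm]
  refine @measurable_of_tendsto_metrizable _ _ (⨆ n, adicFiltration hN0 n) _ _ _ _
    (fun n x ↦ (⌊(N : ℝ) ^ n * x⌋₊ : ℝ) / (N : ℝ) ^ n) _ (fun n ↦ ?_) ?_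
  · have index : Measurable[adicFiltration hN0 n] fun x : ℝ ↦ ⌊(N : ℝ) ^ n * x⌋₊ :=
      comap_measurable _
    exact ((measurable_from_top (f := fun k : ℕ ↦ (k : ℝ) / (N : ℝ) ^ n)).comp index).mono
      (le_iSup (fun n ↦ (adicFiltration hN0 n : MeasurableSpace ℝ)) n) le_rfl
  · refine tendsto_pi_nhds.2 fun x ↦ ?_
    simp only [← floor_max]
    exact (tendsto_nat_floor_mul_div_atTop (le_max_right x 0)).comp
      (tendsto_pow_atTop_atTop_of_one_lt (Nat.one_lt_cast.2 hN))

lemma aestronglyMeasurable_iSup_adicFiltration (hN : 1 < N)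
    (hφ : AEStronglyMeasurable φ (volume.restrict (Ico 0 1))) :
    AEStronglyMeasurable[⨆ n, adicFiltration (zero_lt_one.trans hN) n] φ
      (volume.restrict (Ico 0 1)) := by
  refine ⟨fun x ↦ hφ.mk φ (max x 0), hφ.stronglyMeasurable_mk.comp_measurable
    (measurable_max_zero_iSup_adicFiltration hN), ?_⟩
  filter_upwards [hφ.ae_eq_mk, ae_restrict_mem measurableSet_Ico] with x hx hx1
  rw [hx, max_eq_left hx1.1]

lemma tendsto_adicMartingale (hN : 1 < N) (hφ : IntegrableOn φ (Ico 0 1)) :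
    ∀ᵐ x ∂volume.restrict (Ico 0 1),
      Tendsto (adicMartingale N φ · x) atTop (nhds |φ x|) := by
  have hN0 : 0 < N := by omega
  have limit : (volume.restrict (Ico 0 1))[fun x ↦ |φ x| | ⨆ n, adicFiltration hN0 n]
      =ᵐ[volume.restrict (Ico 0 1)] fun x ↦ |φ x| :=
    condExp_of_aestronglyMeasurable' (iSup_le (adicFiltration hN0).le)
      (aestronglyMeasurable_iSup_adicFiltration hN hφ.abs.1) hφ.abs
  filter_upwards [tendsto_ae_condExp (ℱ := adicFiltration hN0) (fun x ↦ |φ x|), limit,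
    ae_all_iff.2 fun n ↦ adicMartingale_ae_eq_condExp (n := n) hN0 hφ] with x lim hlim hx
  simpa only [hx, ← hlim] using lim

lemma integrableOn_of_memLp_ofReal (hp : 1 ≤ p)
    (hφ : MemLp φ (ENNReal.ofReal p) (volume.restrict (Ico 0 1))) : IntegrableOn φ (Ico 0 1) :=
  hφ.integrable (ENNReal.one_le_ofReal.2 hp)

lemma memLp_adicMartingale (hN : 0 < N) (hp : 1 ≤ p)
    (hφ : MemLp φ (ENNReal.ofReal p) (volume.restrict (Ico 0 1))) :
    MemLp (adicMartingale N φ n) (ENNReal.ofReal p) (volume.restrict (Ico 0 1)) :=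
  (hφ.abs.condExp (ENNReal.one_le_ofReal.2 hp)).ae_eq
    (adicMartingale_ae_eq_condExp hN (integrableOn_of_memLp_ofReal hp hφ)).symm

lemma integral_adicMartingale_rpow_le (hN : 0 < N) (hp : 1 ≤ p)
    (hφ : MemLp φ (ENNReal.ofReal p) (volume.restrict (Ico 0 1))) :
    ∫ x in Ico 0 1, adicMartingale N φ n x ^ p ≤ ∫ x in Ico 0 1, |φ x| ^ p := by
  have hint : Integrable (fun x ↦ ‖|φ x|‖ ^ p) (volume.restrict (Ico 0 1)) := by
    simp only [norm_abs_eq_norm]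
    exact integrable_rpow_of_memLp (by linarith) (fun x ↦ norm_nonneg _) hφ.norm
  calc ∫ x in Ico 0 1, adicMartingale N φ n x ^ p
      = ∫ x in Ico 0 1,
          ‖(volume.restrict (Ico 0 1))[fun x ↦ |φ x| | adicFiltration hN n] x‖ ^ p := by
        refine integral_congr_ae ?_
        filter_upwards [adicMartingale_ae_eq_condExp (n := n) hN
          (integrableOn_of_memLp_ofReal hp hφ)] with x hx
        rw [← hx, Real.norm_of_nonneg (adicMartingale_nonneg n x)]
    _ ≤ ∫ x in Ico 0 1, |φ x| ^ p := by
        simpa only [norm_abs_eq_norm, Real.norm_eq_abs] using integral_norm_condExp_rpow_le hp hint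

lemma memLp_iSup_adicMartingale (hN : 1 < N) (hp : 1 < p)
    (hφ : MemLp φ (ENNReal.ofReal p) (volume.restrict (Ico 0 1))) :
    MemLp (fun x ↦ ⨆ n, adicMartingale N φ n x) (ENNReal.ofReal p) (volume.restrict (Ico 0 1)) :=
  memLp_iSup (martingale_adicMartingale (zero_lt_one.trans hN)
      (integrableOn_of_memLp_ofReal hp.le hφ)) adicMartingale_nonneg
    (fun _ ↦ memLp_adicMartingale (zero_lt_one.trans hN) hp.le hφ) hp
    (fun _ ↦ integral_adicMartingale_rpow_le (zero_lt_one.trans hN) hp.le hφ)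
    ((tendsto_adicMartingale hN (integrableOn_of_memLp_ofReal hp.le hφ)).mono
      fun _ hx ↦ hx.bddAbove_range)

lemma adicMax_nonneg : 0 ≤ adicMax N φ x :=
  Real.sSup_nonneg fun _ ⟨_, _, _, _, h⟩ ↦ h ▸ adicAvg_nonneg

lemma setIntegral_le_supMeas {κ : ℝ} {E : Set ℝ} (hM : IntegrableOn (adicMax N φ · ^ p) (Ico 0 1))
    (hE : MeasurableSet E) (hE1 : E ⊆ Ico 0 1) (hEκ : volume E = ENNReal.ofReal κ) :
    ∫ x in E, adicMax N φ x ^ p ≤ supMeas N p κ φ := by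
  refine le_csSup ⟨∫ x in Ico 0 1, adicMax N φ x ^ p, ?_⟩ ⟨E, hE, hE1, hEκ, rfl⟩
  rintro _ ⟨E', -, hE', -, rfl⟩
  exact setIntegral_mono_set hM (ae_of_all _ fun _ ↦ Real.rpow_nonneg adicMax_nonneg _)
    hE'.eventuallyLE

lemma setIntegral_iSup_adicMartingale_le_supMeas {κ : ℝ} {E : Set ℝ} (hN : 1 < N) (hp : 1 < p)
    (hφ : MemLp φ (ENNReal.ofReal p) (volume.restrict (Ico 0 1))) (hE : MeasurableSet E)
    (hEκ : volume.restrict (Ico 0 1) E = ENNReal.ofReal κ) :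
    ∫ x in E, (⨆ n, adicMartingale N φ n x) ^ p ∂volume.restrict (Ico 0 1) ≤
      supMeas N p κ φ := by
  have hN0 : 0 < N := by omega
  have hM : IntegrableOn (adicMax N φ · ^ p) (Ico 0 1) :=
    (integrableOn_congr_fun (fun x hx ↦ congrArg (· ^ p) (adicMax_eq_iSup hN0 hx))
      measurableSet_Ico).2 (integrable_rpow_of_memLp (by linarith)
        (fun x ↦ Real.iSup_nonneg fun n ↦ adicMartingale_nonneg n x)
        (memLp_iSup_adicMartingale hN hp hφ))
  rw [Measure.restrict_apply hE] at hEκ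
  rw [Measure.restrict_restrict hE, ← setIntegral_congr_fun (hE.inter measurableSet_Ico)
    fun x hx ↦ congrArg (· ^ p) (adicMax_eq_iSup hN0 hx.2)]
  exact setIntegral_le_supMeas hM (hE.inter measurableSet_Ico) inter_subset_right hEκ

lemma exists_level_le_supMeas {κ : ℝ} (hN : 1 < N) (hp : 1 < p)
    (hφ : MemLp φ (ENNReal.ofReal p) (volume.restrict (Ico 0 1)))
    (hφ0 : 0 < ∫ x in Ico 0 1, |φ x|) (hκ : κ ∈ Ioc 0 1) :
    ∃ l ∈ Icc (∫ x in Ico 0 1, |φ x|) ((∫ x in Ico 0 1, |φ x|) / κ),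
      κ * l ^ p ≤ supMeas N p κ φ ∧
      κ * l ^ p + jumpConst N p *
          ((∫ x in Ico 0 1, |φ x| ^ p) - l ^ (p - 1) * ∫ x in Ico 0 1, |φ x|) ≤
        supMeas N p κ φ := by
  have hN0 : 0 < N := by omega
  have hφ1 : IntegrableOn φ (Ico 0 1) := integrableOn_of_memLp_ofReal hp.le hφ
  have unit := ae_restrict_mem (μ := volume) (measurableSet_Ico (a := (0 : ℝ)) (b := 1))
  obtain ⟨l, hl, E, hE, hEκ, hle, hle'⟩ := exists_setIntegral_iSup_rpow_ge
    (martingale_adicMartingale hN0 hφ1) adicMartingale_nonneg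
    (fun _ ↦ memLp_adicMartingale hN0 hp.le hφ) hp (Nat.one_lt_cast.2 hN)
    (fun n ↦ unit.mono fun x hx ↦ adicMartingale_succ_le hN0 hφ1 hx) hφ0
    (unit.mono fun x hx ↦ adicMartingale_zero hx) (tendsto_adicMartingale hN hφ1)
    (memLp_iSup_adicMartingale hN hp hφ) hκ
  have hsup := setIntegral_iSup_adicMartingale_le_supMeas hN hp hφ hE hEκ
  exact ⟨l, hl, hle.trans hsup, hle'.trans hsup⟩

end Adic

theorem stmt5 (N : ℕ) (hN : 2 ≤ N) (p f F κ : ℝ) (hp : 1 < p)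
    (hf : 0 < f) (hF : 0 < F) (hfF : f ^ p ≤ F) (hκ : κ ∈ Set.Ioc (0:ℝ) 1)
    (φ : ℝ → ℝ) (hφm : Measurable φ) (hφ0 : ∀ x ∈ Set.Ico (0:ℝ) 1, 0 ≤ φ x)
    (hφ1 : (∫ x in Set.Ico (0:ℝ) 1, φ x) = f)
    (hφp : (∫ x in Set.Ico (0:ℝ) 1, φ x ^ p) = F) :
    supMeas N p κ φ ≥
      sInf ((fun u : ℝ => κ * u ^ p +
          (((N : ℝ) ^ p - 1) / ((N : ℝ) ^ p - N)) * (F - u ^ (p - 1) * f)) ''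
        Set.Icc f (min ((F / f) ^ (1 / (p - 1))) (f / κ))) := by
  have abs_eq : EqOn (fun x ↦ |φ x|) φ (Ico 0 1) := fun x hx ↦ abs_of_nonneg (hφ0 x hx)
  have abs_rpow_eq : EqOn (fun x ↦ |φ x| ^ p) (fun x ↦ φ x ^ p) (Ico 0 1) :=
    fun x hx ↦ congrArg (· ^ p) (abs_eq hx)
  rw [← setIntegral_congr_fun measurableSet_Ico abs_eq] at hφ1
  rw [← setIntegral_congr_fun measurableSet_Ico abs_rpow_eq] at hφp
  have memLp : MemLp φ (ENNReal.ofReal p) (volume.restrict (Ico 0 1)) := by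
    rw [← memLp_norm_iff hφm.aestronglyMeasurable, memLp_ofReal_iff_integrable_rpow (by linarith)
      (fun x ↦ norm_nonneg _) hφm.norm.aestronglyMeasurable]
    exact not_imp_comm.1 integral_undef (hφp.trans_ne hF.ne')
  obtain ⟨l, hl, hle, hle'⟩ :=
    exists_level_le_supMeas (κ := κ) hN hp memLp (hφ1.symm ▸ hf) hκ
  rw [hφ1] at hl
  rw [hφ1, hφp] at hle'
  exact sInf_image_le_of_level hp hf hfF hκ.1.le (jumpConst_pos (Nat.one_lt_cast.2 hN) hp).le hl
    hle hle'
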